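/- Let $(x_n)_{n \geq 1}$ be a sequence in $[0,1)$ whose pair correlations are asymptotically Poissonian, i.e. for every real $s > 0$, $\lim_{N \to \infty} \frac{1}{N}\#\{(m,n) : 1 \leq m,n \leq N,\ m \neq n,\ \|x_m - x_n\| \leq s/N\} = 2s$. Then $(x_n)$ is equidistributed: for all $0 \leq a \leq b \leq 1$, $\lim_{N \to \infty} \frac{1}{N}\#\{1 \leq n \leq N : x_n \in [a,b]\} = b - a$. -/

import Mathlib

open Finset Filter

/-- Distance to the nearest integer. -/
noncomputable def distToInt (t : ℝ) : ℝ := |t - round t|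

/-!
Cut `[0, 1]` into `N` cells of length `1 / N` and slide a window of `L` consecutive cells along it.
The number of points in the window has mean about `L`, and its second moment counts pairs of points
fewer than `l` cells apart, summed over `1 ≤ l ≤ L`. Since at most about `2 l N` such pairs have
distinct members, the second moment is `N (L² + O(L))`, so the mean square deviation from `L` is
only `O(L)`. Averaging over the windows that meet `[a, b]` shows that asymptotically at most a
proportion `b - a` of the points lies in `[a, b]`; the same upper bound for `[0, a]` and `[b, 1]`
yields the lower bound. Only an upper bound `2 s + O(1)` for the pair correlation function enters.
-/

theorem sum_Icc_one_two_mul_add {R : Type*} [CommSemiring R] (L : ℕ) (C : R) :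
    ∑ l ∈ Icc 1 L, (2 * (l : R) + C) = L ^ 2 + (C + 1) * L := by
  induction L with
  | zero => simp
  | succ L ih =>
    rw [sum_Icc_succ_top (by omega), ih]
    push_cast
    ring

theorem sum_le_of_sum_sub_sq_le {ι K : Type*} [Field K] [LinearOrder K] [IsStrictOrderedRing K]
    {s : Finset ι} {f : ι → K} {μ t V : K} (ht : 0 < t) (hV : ∑ i ∈ s, (f i - μ) ^ 2 ≤ V) :
    ∑ i ∈ s, f i ≤ (μ + t) * #s + V / (4 * t) := by
  have pointwise (i : ι) : f i ≤ (μ + t) + (f i - μ) ^ 2 / (4 * t) := by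
    rw [← sub_le_iff_le_add', le_div_iff₀ (by positivity)]
    linarith [sq_nonneg (f i - μ - 2 * t)]
  calc ∑ i ∈ s, f i ≤ ∑ i ∈ s, ((μ + t) + (f i - μ) ^ 2 / (4 * t)) :=
        sum_le_sum fun i _ => pointwise i
    _ = (μ + t) * #s + (∑ i ∈ s, (f i - μ) ^ 2) / (4 * t) := by
        rw [sum_add_distrib, sum_const, nsmul_eq_mul, sum_div, mul_comm]
    _ ≤ (μ + t) * #s + V / (4 * t) := by gcongr

section Floor

variable {R : Type*} [CommRing R] [LinearOrder R] [IsStrictOrderedRing R] [FloorRing R]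

theorem abs_sub_le_of_abs_floor_sub_floor_lt {u v : R} {l : ℕ} (h : |⌊u⌋ - ⌊v⌋| < (l : ℤ)) :
    |u - v| ≤ l := by
  have hfloor : |(⌊u⌋ : R) - ⌊v⌋| ≤ (l : R) - 1 := by exact_mod_cast Int.le_sub_one_of_lt h
  rw [abs_le] at hfloor ⊢
  constructor <;>
    linarith [Int.floor_le u, Int.floor_le v, Int.lt_floor_add_one u, Int.lt_floor_add_one v]

theorem card_Ioc_floor_sub_le {u v : R} (huv : u ≤ v) (L : ℕ) :
    (#(Ioc (⌊u⌋ - L) ⌊v⌋) : R) ≤ v - u + L + 1 := by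
  have hcard : (#(Ioc (⌊u⌋ - L) ⌊v⌋) : ℤ) = ⌊v⌋ - (⌊u⌋ - L) :=
    Int.card_Ioc_of_le _ _ (by linarith [Int.floor_mono huv])
  have hcard' : (#(Ioc (⌊u⌋ - L) ⌊v⌋) : R) = ⌊v⌋ - (⌊u⌋ - L) := by exact_mod_cast hcard
  linarith [Int.floor_le v, Int.lt_floor_add_one u]

theorem floor_natCast_mul_mem_Icc {t : R} (ht : t ∈ Set.Icc (0 : R) 1) (N : ℕ) :
    ⌊N * t⌋ ∈ Icc 0 (N : ℤ) := by
  refine mem_Icc.2 ⟨Int.floor_nonneg.2 (mul_nonneg N.cast_nonneg ht.1), ?_⟩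
  calc ⌊N * t⌋ ≤ ⌊(N : R)⌋ := Int.floor_mono (mul_le_of_le_one_right N.cast_nonneg ht.2)
    _ = N := Int.floor_natCast N

end Floor

section WindowCount

variable {ι : Type*} (S : Finset ι) (c : ι → ℤ) (L : ℕ)

/-- The number of indices in `S` whose cell `c n` lies in the window of `L` consecutive cells that
starts at `j`. -/
def windowCount (j : ℤ) : ℕ := #{n ∈ S | j ≤ c n ∧ c n < j + L}

variable {S} in
theorem mul_card_le_sum_windowCount {T : Finset ι} (hTS : T ⊆ S) {J : Finset ℤ}
    (hJ : ∀ n ∈ T, Ioc (c n - L) (c n) ⊆ J) :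
    L * #T ≤ ∑ j ∈ J, windowCount S c L j := by
  let inWindow : ℤ → ι → Prop := fun j n => j ≤ c n ∧ c n < j + L
  have windows_containing : ∀ n ∈ T, L ≤ #(J.bipartiteBelow inWindow n) := fun n hn => by
    calc L = #(Ioc (c n - L) (c n)) := by simp
      _ ≤ #(J.bipartiteBelow inWindow n) := card_le_card fun j hj => by
          refine (mem_bipartiteBelow _).2 ⟨hJ n hn hj, ?_⟩
          rw [mem_Ioc] at hj
          constructor <;> omega
  calc L * #T = ∑ _n ∈ T, L := by rw [sum_const, smul_eq_mul, mul_comm]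
    _ ≤ ∑ n ∈ T, #(J.bipartiteBelow inWindow n) := sum_le_sum windows_containing
    _ ≤ ∑ n ∈ S, #(J.bipartiteBelow inWindow n) := sum_le_sum_of_subset hTS
    _ = ∑ j ∈ J, windowCount S c L j :=
        (sum_card_bipartiteAbove_eq_sum_card_bipartiteBelow inWindow).symm

/-- The number of ordered pairs of indices in `S`, diagonal included, whose cells are fewer than
`l` apart. -/
def closeCellCount (l : ℕ) : ℕ := #{p ∈ S ×ˢ S | |c p.1 - c p.2| < l}

theorem sum_windowCount_sq_le (J : Finset ℤ) :
    ∑ j ∈ J, windowCount S c L j ^ 2 ≤ ∑ l ∈ Icc 1 L, closeCellCount S c l := by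
  let inWindow : ℤ → ι × ι → Prop := fun j p =>
    (j ≤ c p.1 ∧ c p.1 < j + L) ∧ (j ≤ c p.2 ∧ c p.2 < j + L)
  let close : ℕ → ι × ι → Prop := fun l p => |c p.1 - c p.2| < l
  have sq_eq : ∀ j, windowCount S c L j ^ 2 = #((S ×ˢ S).bipartiteAbove inWindow j) := fun j => by
    rw [sq, windowCount, ← card_product, ← filter_product]
    rfl
  -- A window starting at `j` that contains both cells is sent to the distance, plus one, from `j`
  -- to the larger of them.
  have windows_le (p : ι × ι) :
      #(J.bipartiteBelow inWindow p) ≤ #((Icc 1 L).bipartiteBelow close p) := by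
    refine card_le_card_of_injOn (fun j => (max (c p.1) (c p.2) - j + 1).toNat) ?_ ?_
    · intro j hj
      simp only [coe_bipartiteBelow, Set.mem_ofPred_eq, inWindow, close, mem_Icc] at hj ⊢
      grind
    · intro j hj k hk hjk
      simp only [coe_bipartiteBelow, Set.mem_ofPred_eq, inWindow] at hj hk hjk
      grind
  calc ∑ j ∈ J, windowCount S c L j ^ 2
      = ∑ j ∈ J, #((S ×ˢ S).bipartiteAbove inWindow j) := sum_congr rfl fun j _ => sq_eq j
    _ = ∑ p ∈ S ×ˢ S, #(J.bipartiteBelow inWindow p) :=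
        sum_card_bipartiteAbove_eq_sum_card_bipartiteBelow inWindow
    _ ≤ ∑ p ∈ S ×ˢ S, #((Icc 1 L).bipartiteBelow close p) := sum_le_sum fun p _ => windows_le p
    _ = ∑ l ∈ Icc 1 L, closeCellCount S c l :=
        (sum_card_bipartiteAbove_eq_sum_card_bipartiteBelow close).symm

variable {S c L}

theorem sum_windowCount_sub_sq_le {C : ℝ} (hc : ∀ n ∈ S, c n ∈ Icc 0 (#S : ℤ))
    (hclose : ∀ l ∈ Icc 1 L, (closeCellCount S c l : ℝ) ≤ (2 * l + C) * #S) :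
    ∑ j ∈ Ioc (-L : ℤ) #S, ((windowCount S c L j : ℝ) - L) ^ 2 ≤
      (C + 1) * L * #S + L ^ 3 := by
  set K := Ioc (-L : ℤ) #S
  have card_windows : (#K : ℝ) = #S + L := by
    rw [Int.card_Ioc, sub_neg_eq_add]
    norm_cast
  have first_moment : (L : ℝ) * #S ≤ ∑ j ∈ K, (windowCount S c L j : ℝ) := by
    exact_mod_cast mul_card_le_sum_windowCount c L subset_rfl fun n hn => by
      obtain ⟨h0, hS⟩ := mem_Icc.1 (hc n hn)
      exact Ioc_subset_Ioc (by omega) hS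
  have second_moment :
      ∑ j ∈ K, (windowCount S c L j : ℝ) ^ 2 ≤ (L ^ 2 + (C + 1) * L) * #S := by
    calc ∑ j ∈ K, (windowCount S c L j : ℝ) ^ 2
        ≤ ∑ l ∈ Icc 1 L, (closeCellCount S c l : ℝ) := mod_cast sum_windowCount_sq_le S c L K
      _ ≤ ∑ l ∈ Icc 1 L, (2 * l + C) * #S := sum_le_sum hclose
      _ = (L ^ 2 + (C + 1) * L) * #S := by rw [← sum_mul, sum_Icc_one_two_mul_add]
  calc ∑ j ∈ K, ((windowCount S c L j : ℝ) - L) ^ 2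
      = ∑ j ∈ K, (windowCount S c L j : ℝ) ^ 2 - 2 * L * ∑ j ∈ K, (windowCount S c L j : ℝ)
          + #K * L ^ 2 := by
        rw [mul_sum, ← sum_sub_distrib, ← nsmul_eq_mul, ← sum_const, ← sum_add_distrib]
        exact sum_congr rfl fun _ _ => by ring
    _ ≤ (L ^ 2 + (C + 1) * L) * #S - 2 * L * (L * #S) + (#S + L) * L ^ 2 := by
        rw [card_windows]
        gcongr
    _ = (C + 1) * L * #S + L ^ 3 := by ring

end WindowCount

section ClosePairs

variable {ι : Type*}

/-- The ordered pairs of distinct indices in `S` whose points are at distance at most `r` on the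
real line. -/
noncomputable def closePairs (S : Finset ι) (y : ι → ℝ) (r : ℝ) : Finset (ι × ι) :=
  {p ∈ S.offDiag | |y p.1 - y p.2| ≤ r}

theorem closeCellCount_floor_le (S : Finset ι) (y : ι → ℝ) (l : ℕ) :
    closeCellCount S (fun n => ⌊#S * y n⌋) l ≤ #S + #(closePairs S y (l / #S)) := by
  classical
  have hsub : ({p ∈ S ×ˢ S | |⌊#S * y p.1⌋ - ⌊#S * y p.2⌋| < (l : ℤ)} : Finset (ι × ι)) ⊆
      S.diag ∪ closePairs S y (l / #S) := by
    rintro ⟨m, n⟩ hp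
    obtain ⟨hmn, hclose⟩ := mem_filter.1 hp
    obtain ⟨hm, hn⟩ := mem_product.1 hmn
    by_cases heq : m = n
    · exact mem_union_left _ (mem_diag.2 ⟨hm, heq⟩)
    have hS : (0 : ℝ) < #S := mod_cast card_pos.2 ⟨m, hm⟩
    refine mem_union_right _ (mem_filter.2 ⟨mem_offDiag.2 ⟨hm, hn, heq⟩, ?_⟩)
    calc |y m - y n| = |#S * y m - #S * y n| / #S := by
          rw [← mul_sub, abs_mul, abs_of_pos hS, mul_div_cancel_left₀ _ hS.ne']
      _ ≤ l / #S := by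
          gcongr
          exact abs_sub_le_of_abs_floor_sub_floor_lt hclose
  exact (card_le_card hsub).trans ((card_union_le _ _).trans_eq (by rw [diag_card]))

theorem closePairs_subset_filter_distToInt_le [DecidableEq ι] (S : Finset ι) (y : ι → ℝ) (r : ℝ) :
    closePairs S y r ⊆ {p ∈ S ×ˢ S | p.1 ≠ p.2 ∧ distToInt (y p.1 - y p.2) ≤ r} := by
  intro p hp
  simp only [closePairs, mem_filter, mem_offDiag] at hp
  obtain ⟨⟨h1, h2, hne⟩, hr⟩ := hp
  have distToInt_le : distToInt (y p.1 - y p.2) ≤ |y p.1 - y p.2| := by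
    simpa [distToInt] using round_le (y p.1 - y p.2) 0
  exact mem_filter.2 ⟨mem_product.2 ⟨h1, h2⟩, hne, distToInt_le.trans hr⟩

theorem mul_card_mem_Icc_le {S : Finset ι} {y : ι → ℝ} {L : ℕ} {C : ℝ}
    (hy : ∀ n ∈ S, y n ∈ Set.Icc (0 : ℝ) 1)
    (hpairs : ∀ l ∈ Icc 1 L, (#(closePairs S y (l / #S)) : ℝ) ≤ (2 * l + C) * #S)
    {a b t : ℝ} (ha : 0 ≤ a) (hab : a ≤ b) (hb : b ≤ 1) (ht : 0 < t) :
    (L : ℝ) * #{n ∈ S | y n ∈ Set.Icc a b} ≤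
      (L + t) * (#S * (b - a) + L + 1) + ((C + 2) * L * #S + L ^ 3) / (4 * t) := by
  set c : ι → ℤ := fun n => ⌊#S * y n⌋
  set J := Ioc (⌊#S * a⌋ - (L : ℤ)) ⌊#S * b⌋
  have hJ : J ⊆ Ioc (-L : ℤ) #S := by
    have hfa := mem_Icc.1 (floor_natCast_mul_mem_Icc ⟨ha, hab.trans hb⟩ #S)
    have hfb := mem_Icc.1 (floor_natCast_mul_mem_Icc ⟨ha.trans hab, hb⟩ #S)
    exact Ioc_subset_Ioc (by linarith) hfb.2
  have card_J : (#J : ℝ) ≤ #S * (b - a) + L + 1 := by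
    rw [mul_sub]
    exact card_Ioc_floor_sub_le (by gcongr) L
  have card_le_sum :
      (L : ℝ) * #{n ∈ S | y n ∈ Set.Icc a b} ≤ ∑ j ∈ J, (windowCount S c L j : ℝ) := by
    exact_mod_cast mul_card_le_sum_windowCount c L (filter_subset _ S) fun n hn => by
      obtain ⟨han, hnb⟩ := (mem_filter.1 hn).2
      exact Ioc_subset_Ioc (sub_le_sub_right (Int.floor_mono (by gcongr)) _)
        (Int.floor_mono (by gcongr))
  have hclose : ∀ l ∈ Icc 1 L, (closeCellCount S c l : ℝ) ≤ (2 * l + (C + 1)) * #S := fun l hl => by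
    have hcells : (closeCellCount S c l : ℝ) ≤ #S + #(closePairs S y (l / #S)) :=
      mod_cast closeCellCount_floor_le S y l
    linarith [hpairs l hl]
  have variance : ∑ j ∈ J, ((windowCount S c L j : ℝ) - L) ^ 2 ≤ (C + 2) * L * #S + L ^ 3 := by
    calc ∑ j ∈ J, ((windowCount S c L j : ℝ) - L) ^ 2
        ≤ ∑ j ∈ Ioc (-L : ℤ) #S, ((windowCount S c L j : ℝ) - L) ^ 2 :=
          sum_le_sum_of_subset_of_nonneg hJ fun _ _ _ => sq_nonneg _
      _ ≤ (C + 1 + 1) * L * #S + L ^ 3 :=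
          sum_windowCount_sub_sq_le (fun n hn => floor_natCast_mul_mem_Icc (hy n hn) _) hclose
      _ = (C + 2) * L * #S + L ^ 3 := by ring
  calc (L : ℝ) * #{n ∈ S | y n ∈ Set.Icc a b} ≤ ∑ j ∈ J, (windowCount S c L j : ℝ) := card_le_sum
    _ ≤ (L + t) * #J + ((C + 2) * L * #S + L ^ 3) / (4 * t) := sum_le_of_sum_sub_sq_le ht variance
    _ ≤ _ := by gcongr

end ClosePairs

section Equidistribution

/-- The proportion of the terms `x 1, …, x N` that lie in `[a, b]`. -/
noncomputable def intervalFreq (x : ℕ → ℝ) (a b : ℝ) (N : ℕ) : ℝ :=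
  (#{n ∈ Icc 1 N | x n ∈ Set.Icc a b} : ℝ) / N

variable {x : ℕ → ℝ}

theorem one_le_intervalFreq_add_add (hx : ∀ n, x n ∈ Set.Icc (0 : ℝ) 1)
    (a b : ℝ) {N : ℕ} (hN : 0 < N) :
    1 ≤ intervalFreq x 0 a N + intervalFreq x a b N + intervalFreq x b 1 N := by
  have hcover : Icc 1 N ⊆ {n ∈ Icc 1 N | x n ∈ Set.Icc 0 a} ∪ {n ∈ Icc 1 N | x n ∈ Set.Icc a b} ∪
      {n ∈ Icc 1 N | x n ∈ Set.Icc b 1} := fun n hn => by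
    simp only [mem_union, mem_filter, hn, true_and, Set.mem_Icc]
    grind
  have hcard := (card_le_card hcover).trans ((card_union_le _ _).trans
    (Nat.add_le_add_right (card_union_le _ _) _))
  rw [Nat.card_Icc, Nat.add_sub_cancel] at hcard
  rw [intervalFreq, intervalFreq, intervalFreq, ← add_div, ← add_div,
    one_le_div (by exact_mod_cast hN)]
  exact_mod_cast hcard

theorem tendsto_intervalFreq_of_eventually_lt (hx : ∀ n, x n ∈ Set.Icc (0 : ℝ) 1)
    (hupper : ∀ a b η : ℝ, 0 ≤ a → a ≤ b → b ≤ 1 → 0 < η →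
      ∀ᶠ N in atTop, intervalFreq x a b N < b - a + η)
    {a b : ℝ} (ha : 0 ≤ a) (hab : a ≤ b) (hb : b ≤ 1) :
    Tendsto (intervalFreq x a b) atTop (nhds (b - a)) := by
  rw [Metric.tendsto_nhds]
  intro η hη
  filter_upwards [hupper a b η ha hab hb hη,
    hupper 0 a (η / 2) le_rfl ha (hab.trans hb) (half_pos hη),
    hupper b 1 (η / 2) (ha.trans hab) hb le_rfl (half_pos hη), eventually_gt_atTop 0]
    with N hmid hleft hright hN
  rw [Real.dist_eq, abs_lt]
  constructor <;> linarith [one_le_intervalFreq_add_add hx a b hN]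

-- `mul_card_mem_Icc_le` with `L = M ^ 2` and `t = M`: all terms but `b - a` vanish when first
-- `N → ∞` and then `M → ∞`.
theorem intervalFreq_le (hx : ∀ n, x n ∈ Set.Icc (0 : ℝ) 1) {M N : ℕ} {C : ℝ}
    (hM : 0 < M) (hN : 0 < N)
    (hpairs : ∀ l ∈ Icc 1 (M ^ 2), (#(closePairs (Icc 1 N) x (l / N)) : ℝ) / N ≤ 2 * l + C)
    {a b : ℝ} (ha : 0 ≤ a) (hab : a ≤ b) (hb : b ≤ 1) :
    intervalFreq x a b N ≤ (b - a) + ((b - a) + (C + 2) / 4) / M +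
      ((1 + 1 / M) * (M ^ 2 + 1) + M ^ 3 / 4) / N := by
  have hM' : (0 : ℝ) < M := mod_cast hM
  have hN' : (0 : ℝ) < N := mod_cast hN
  have hcard : #(Icc 1 N) = N := by rw [Nat.card_Icc, Nat.add_sub_cancel]
  have key := mul_card_mem_Icc_le (S := Icc 1 N) (L := M ^ 2) (C := C) (fun n _ => hx n)
    (fun l hl => by rw [hcard]; exact (div_le_iff₀ hN').1 (hpairs l hl)) ha hab hb hM'
  rw [hcard] at key
  push_cast at key
  rw [intervalFreq, div_le_iff₀ hN', ← mul_le_mul_iff_right₀ (pow_pos hM' 2)]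
  refine key.trans_eq ?_
  field_simp
  ring

theorem eventually_intervalFreq_lt (hx : ∀ n, x n ∈ Set.Icc (0 : ℝ) 1) {C : ℝ}
    (hpairs : ∀ l : ℕ, 0 < l →
      ∀ᶠ N : ℕ in atTop, (#(closePairs (Icc 1 N) x (l / N)) : ℝ) / N ≤ 2 * l + C)
    {a b η : ℝ} (ha : 0 ≤ a) (hab : a ≤ b) (hb : b ≤ 1) (hη : 0 < η) :
    ∀ᶠ N in atTop, intervalFreq x a b N < b - a + η := by
  obtain ⟨M, hMη, hM⟩ : ∃ M : ℕ, ((b - a) + (C + 2) / 4) / M < η / 2 ∧ 0 < M :=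
    (((tendsto_const_div_atTop_nhds_zero_nat _).eventually_lt_const (half_pos hη)).and
      (eventually_gt_atTop 0)).exists
  have hpairs_upto : ∀ᶠ N : ℕ in atTop, ∀ l ∈ Icc 1 (M ^ 2),
      (#(closePairs (Icc 1 N) x (l / N)) : ℝ) / N ≤ 2 * l + C :=
    (eventually_all_finset _).2 fun l hl => hpairs l (mem_Icc.1 hl).1
  have hNη : ∀ᶠ N : ℕ in atTop,
      ((1 + 1 / M) * (M ^ 2 + 1) + M ^ 3 / 4 : ℝ) / N < η / 2 :=
    (tendsto_const_div_atTop_nhds_zero_nat _).eventually_lt_const (half_pos hη)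
  filter_upwards [hpairs_upto, hNη, eventually_gt_atTop 0] with N hN_pairs hN_small hN
  linarith [intervalFreq_le hx hM hN hN_pairs ha hab hb]

end Equidistribution

theorem stmt_10_general {x : ℕ → ℝ} (hx : ∀ n, x n ∈ Set.Icc (0 : ℝ) 1) {C : ℝ}
    (hpairs : ∀ l : ℕ, 0 < l →
      ∀ᶠ N : ℕ in atTop, (#(closePairs (Icc 1 N) x (l / N)) : ℝ) / N ≤ 2 * l + C)
    {a b : ℝ} (ha : 0 ≤ a) (hab : a ≤ b) (hb : b ≤ 1) :
    Tendsto (intervalFreq x a b) atTop (nhds (b - a)) :=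
  tendsto_intervalFreq_of_eventually_lt hx
    (fun _ _ _ => eventually_intervalFreq_lt hx hpairs) ha hab hb

theorem eventually_card_closePairs_div_le {x : ℕ → ℝ} {s ρ : ℝ}
    (h : Tendsto (fun N : ℕ =>
      (#{p ∈ Icc 1 N ×ˢ Icc 1 N | p.1 ≠ p.2 ∧ distToInt (x p.1 - x p.2) ≤ s / N} : ℝ) / N)
      atTop (nhds ρ)) :
    ∀ᶠ N : ℕ in atTop, (#(closePairs (Icc 1 N) x (s / N)) : ℝ) / N ≤ ρ + 1 := by
  filter_upwards [h.eventually_le_const (lt_add_one ρ)] with N hN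
  refine le_trans ?_ hN
  gcongr
  exact closePairs_subset_filter_distToInt_le _ x _

theorem stmt_10 (x : ℕ → ℝ) (hx : ∀ n, x n ∈ Set.Ico (0 : ℝ) 1)
    (hppc : ∀ s : ℝ, 0 < s →
      Tendsto (fun N : ℕ =>
        (((Finset.Icc 1 N ×ˢ Finset.Icc 1 N).filter (fun p : ℕ × ℕ =>
          p.1 ≠ p.2 ∧ distToInt (x p.1 - x p.2) ≤ s / N)).card : ℝ) / N)
        atTop (nhds (2 * s))) :
    ∀ a b : ℝ, 0 ≤ a → a ≤ b → b ≤ 1 →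
      Tendsto (fun N : ℕ =>
        (((Finset.Icc 1 N).filter (fun n => x n ∈ Set.Icc a b)).card : ℝ) / N)
        atTop (nhds (b - a)) := by
  intro a b ha hab hb
  exact stmt_10_general (fun n => Set.Ico_subset_Icc_self (hx n))
    (fun l hl => eventually_card_closePairs_div_le (hppc l (mod_cast hl))) ha hab hb
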